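/- Let G be a finite simple graph, M a matching in G, and K ∈ ℕ. Then there is a matching M' in G such that every vertex covered by M is covered by M' and M' has no augmenting paths of length ≤ 2K+1. -/

import Mathlib

/-- A vertex `v` is covered by a set `M` of edges if it lies on some edge of `M`. -/
def coveredBy {V : Type*} (M : Set (Sym2 V)) (v : V) : Prop := ∃ e ∈ M, v ∈ e

/-- `M` is a matching in `G`: a set of edges of `G`, no two of which share a vertex. -/
def isMatching {V : Type*} (G : SimpleGraph V) (M : Set (Sym2 V)) : Prop :=
  M ⊆ G.edgeSet ∧ ∀ e ∈ M, ∀ f ∈ M, e ≠ f → ∀ v : V, ¬(v ∈ e ∧ v ∈ f)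

/-- `p 0, p 1, …, p l` is an `M`-augmenting path of length `l` in `G`:
a path whose endpoints are not covered by `M`, whose edges alternate outside/inside `M`,
beginning and ending with edges outside `M` (so `l` is odd). -/
def isAugPath {V : Type*} (G : SimpleGraph V) (M : Set (Sym2 V)) (p : ℕ → V) (l : ℕ) : Prop :=
  Odd l ∧ (∀ i < l, G.Adj (p i) (p (i+1))) ∧
  (∀ i ≤ l, ∀ j ≤ l, p i = p j → i = j) ∧
  ¬ coveredBy M (p 0) ∧ ¬ coveredBy M (p l) ∧
  ∀ i < l, (s(p i, p (i+1)) ∈ M ↔ Odd i)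

/-- `G` is bipartite: the vertices can be split into a set `A` and its complement so that
every edge has one endpoint in `A` and the other outside `A`. -/
def isBipartite {V : Type*} (G : SimpleGraph V) : Prop :=
  ∃ A : Set V, ∀ v w : V, G.Adj v w → (v ∈ A ↔ w ∉ A)

/-- `N_G(S)`: vertices adjacent in `G` to some vertex of `S`. -/
def NG {V : Type*} (G : SimpleGraph V) (S : Set V) : Set V := {w | ∃ v ∈ S, G.Adj v w}

/-- `N_M(S)`: vertices joined by an edge of `M` to some vertex of `S`. -/
def NM {V : Type*} (M : Set (Sym2 V)) (S : Set V) : Set V := {w | ∃ v ∈ S, s(v, w) ∈ M}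

/-- `Yseq G M S` : `Y_0 = S`, `Y_{2k+1} = N_G(Y_{2k})`, `Y_{2k+2} = N_M(Y_{2k+1})`. -/
def Yseq {V : Type*} (G : SimpleGraph V) (M : Set (Sym2 V)) (S : Set V) : ℕ → Set V
  | 0 => S
  | (l+1) => if Even l then NG G (Yseq G M S l) else NM M (Yseq G M S l)

/-- `Wseq G M x` : `W_0 = {x}`, `W_{2k+1} = N_M(W_{2k})`, `W_{2k+2} = N_G(W_{2k+1})`. -/
def Wseq {V : Type*} (G : SimpleGraph V) (M : Set (Sym2 V)) (x : V) : ℕ → Set V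
  | 0 => {x}
  | (l+1) => if Even l then NM M (Wseq G M x l) else NG G (Wseq G M x l)

/-- The set of edges of the path `p 0, …, p l`. -/
def pathEdges {V : Type*} (p : ℕ → V) (l : ℕ) : Set (Sym2 V) :=
  {e | ∃ i < l, e = s(p i, p (i+1))}

/-! Exchanging the edges of a matching `M` along an `M`-augmenting path `P`, that is, passing from
`M` to `M ∆ E(P)`, gives a matching that covers every vertex covered by `M` and also the two
endpoints of `P`. Hence a matching with the fewest uncovered vertices, among those covering
everything that `M` covers, has no augmenting path of any length. -/

section Augmentation

open scoped symmDiff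

variable {V : Type*} {G : SimpleGraph V} {M : Set (Sym2 V)} {p : ℕ → V} {l : ℕ}

theorem isMatching.eq_of_mem (hM : isMatching G M) {e f : Sym2 V} {v : V}
    (he : e ∈ M) (hf : f ∈ M) (hve : v ∈ e) (hvf : v ∈ f) : e = f :=
  not_not.1 fun hne => hM.2 e he f hf hne v ⟨hve, hvf⟩

theorem exists_apply_eq_of_mem_pathEdges {e : Sym2 V} {v : V} (he : e ∈ pathEdges p l)
    (hv : v ∈ e) : ∃ i ≤ l, p i = v := by
  obtain ⟨i, hi, rfl⟩ := he
  rcases Sym2.mem_iff.1 hv with rfl | rfl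
  · exact ⟨i, hi.le, rfl⟩
  · exact ⟨i + 1, hi, rfl⟩

theorem pathEdges_subset_edgeSet (hadj : ∀ i < l, G.Adj (p i) (p (i + 1))) :
    pathEdges p l ⊆ G.edgeSet := by
  rintro _ ⟨i, hi, rfl⟩
  exact hadj i hi

theorem exists_even_mem_edge_of_odd (hl : Odd l) {i : ℕ} (hi : i ≤ l) :
    ∃ j < l, Even j ∧ p i ∈ s(p j, p (j + 1)) := by
  obtain ⟨m, rfl⟩ := hl
  obtain ⟨k, rfl | rfl⟩ := Nat.even_or_odd' i
  · exact ⟨2 * k, by lia, even_two_mul k, Sym2.mem_mk_left _ _⟩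
  · exact ⟨2 * k, by lia, even_two_mul k, Sym2.mem_mk_right _ _⟩

theorem eq_of_mem_edge_of_even_iff (hp : Set.InjOn p (Set.Iic l)) {i j : ℕ} (hi : i < l)
    (hj : j < l) (hij : Even i ↔ Even j) {v : V} (hvi : v ∈ s(p i, p (i + 1)))
    (hvj : v ∈ s(p j, p (j + 1))) : i = j := by
  have index_eq : ∀ {a b : ℕ}, a ≤ l → b ≤ l → v = p a → v = p b → a = b :=
    fun ha hb hva hvb => hp ha hb (hva.symm.trans hvb)
  rcases Sym2.mem_iff.1 hvi with hvi | hvi <;> rcases Sym2.mem_iff.1 hvj with hvj | hvj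
  · exact index_eq hi.le hj.le hvi hvj
  · grind [index_eq hi.le hj hvi hvj]
  · grind [index_eq hi hj.le hvi hvj]
  · exact Nat.succ_injective (index_eq hi hj hvi hvj)

namespace isAugPath

theorem odd_length (h : isAugPath G M p l) : Odd l :=
  h.1

theorem adj (h : isAugPath G M p l) : ∀ i < l, G.Adj (p i) (p (i + 1)) :=
  h.2.1

theorem injOn (h : isAugPath G M p l) : Set.InjOn p (Set.Iic l) :=
  fun i hi j hj => h.2.2.1 i hi j hj

theorem mem_iff_odd (h : isAugPath G M p l) {i : ℕ} (hi : i < l) :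
    s(p i, p (i + 1)) ∈ M ↔ Odd i :=
  h.2.2.2.2.2 i hi

theorem not_coveredBy_apply_zero (h : isAugPath G M p l) : ¬ coveredBy M (p 0) :=
  h.2.2.2.1

theorem not_coveredBy_apply_length (h : isAugPath G M p l) : ¬ coveredBy M (p l) :=
  h.2.2.2.2.1

theorem exists_odd_mem_edge (h : isAugPath G M p l) {i : ℕ} (hi : i ≤ l)
    (hcov : coveredBy M (p i)) : ∃ j < l, Odd j ∧ p i ∈ s(p j, p (j + 1)) := by
  have hi_ne_zero : i ≠ 0 := by
    rintro rfl
    exact h.not_coveredBy_apply_zero hcov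
  have hi_ne_l : i ≠ l := by
    rintro rfl
    exact h.not_coveredBy_apply_length hcov
  obtain hi_even | hi_odd := Nat.even_or_odd i
  · obtain ⟨j, rfl⟩ := Nat.exists_eq_add_one_of_ne_zero hi_ne_zero
    exact ⟨j, hi, by grind, Sym2.mem_mk_right _ _⟩
  · exact ⟨i, by lia, hi_odd, Sym2.mem_mk_left _ _⟩

theorem mem_pathEdges_of_apply_mem (h : isAugPath G M p l) (hM : isMatching G M) {e : Sym2 V}
    (he : e ∈ M) {i : ℕ} (hi : i ≤ l) (hie : p i ∈ e) : e ∈ pathEdges p l := by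
  obtain ⟨j, hj, hj_odd, hij⟩ := h.exists_odd_mem_edge hi ⟨e, he, hie⟩
  exact ⟨j, hj, hM.eq_of_mem he ((h.mem_iff_odd hj).2 hj_odd) hie hij⟩

theorem eq_of_mem_pathEdges_diff (h : isAugPath G M p l) {e f : Sym2 V} {v : V}
    (he : e ∈ pathEdges p l \ M) (hf : f ∈ pathEdges p l \ M) (hve : v ∈ e) (hvf : v ∈ f) :
    e = f := by
  obtain ⟨⟨i, hi, rfl⟩, hiM⟩ := he
  obtain ⟨⟨j, hj, rfl⟩, hjM⟩ := hf
  rw [h.mem_iff_odd hi, Nat.not_odd_iff_even] at hiM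
  rw [h.mem_iff_odd hj, Nat.not_odd_iff_even] at hjM
  rw [eq_of_mem_edge_of_even_iff h.injOn hi hj (iff_of_true hiM hjM) hve hvf]

theorem isMatching_symmDiff (h : isAugPath G M p l) (hM : isMatching G M) :
    isMatching G (M ∆ pathEdges p l) := by
  have disjoint_of_mem : ∀ {e f : Sym2 V} {v : V}, e ∈ M \ pathEdges p l → f ∈ pathEdges p l →
      v ∈ e → v ∉ f := by
    rintro e f v ⟨heM, heP⟩ hf hve hvf
    obtain ⟨i, hi, rfl⟩ := exists_apply_eq_of_mem_pathEdges hf hvf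
    exact heP (h.mem_pathEdges_of_apply_mem hM heM hi hve)
  refine ⟨Set.symmDiff_subset_union.trans
    (Set.union_subset hM.1 (pathEdges_subset_edgeSet h.adj)), ?_⟩
  rintro e (he | he) f (hf | hf) hne v ⟨hve, hvf⟩
  · exact hne (hM.eq_of_mem he.1 hf.1 hve hvf)
  · exact disjoint_of_mem he hf.1 hve hvf
  · exact disjoint_of_mem hf he.1 hvf hve
  · exact hne (h.eq_of_mem_pathEdges_diff he hf hve hvf)

theorem coveredBy_symmDiff_apply (h : isAugPath G M p l) {i : ℕ} (hi : i ≤ l) :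
    coveredBy (M ∆ pathEdges p l) (p i) := by
  obtain ⟨j, hj, hj_even, hij⟩ := exists_even_mem_edge_of_odd (p := p) h.odd_length hi
  have hjM : s(p j, p (j + 1)) ∉ M := by rwa [h.mem_iff_odd hj, Nat.not_odd_iff_even]
  exact ⟨_, Or.inr ⟨⟨j, hj, rfl⟩, hjM⟩, hij⟩

theorem coveredBy_symmDiff (h : isAugPath G M p l) {v : V} (hv : coveredBy M v) :
    coveredBy (M ∆ pathEdges p l) v := by
  obtain ⟨e, heM, hve⟩ := hv
  by_cases heP : e ∈ pathEdges p l
  · obtain ⟨i, hi, rfl⟩ := exists_apply_eq_of_mem_pathEdges heP hve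
    exact h.coveredBy_symmDiff_apply hi
  · exact ⟨e, Or.inl ⟨heM, heP⟩, hve⟩

theorem uncovered_symmDiff_ssubset (h : isAugPath G M p l) :
    {v | ¬ coveredBy (M ∆ pathEdges p l) v} ⊂ {v | ¬ coveredBy M v} :=
  Set.ssubset_iff_exists.2 ⟨fun _ => mt h.coveredBy_symmDiff,
    p 0, h.not_coveredBy_apply_zero, not_not.2 (h.coveredBy_symmDiff_apply l.zero_le)⟩

end isAugPath

end Augmentation

open scoped symmDiff in
theorem stmt12_general {V : Type*} (G : SimpleGraph V) (M : Set (Sym2 V)) (hM : isMatching G M)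
    (hfin : {v | ¬ coveredBy M v}.Finite) :
    ∃ M' : Set (Sym2 V), isMatching G M' ∧
      (∀ v : V, coveredBy M v → coveredBy M' v) ∧
      ∀ (p : ℕ → V) (l : ℕ), ¬ isAugPath G M' p l := by
  obtain ⟨N, ⟨hN, hMN⟩, hmin⟩ := exists_minimalFor_of_wellFoundedLT
    (fun N => isMatching G N ∧ ∀ v, coveredBy M v → coveredBy N v)
    (fun N => {v | ¬ coveredBy N v}.ncard) ⟨M, hM, fun _ => id⟩
  refine ⟨N, hN, hMN, fun p l h => ?_⟩
  have hlt : {v | ¬ coveredBy (N ∆ pathEdges p l) v}.ncard < {v | ¬ coveredBy N v}.ncard :=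
    Set.ncard_lt_ncard h.uncovered_symmDiff_ssubset (hfin.subset fun v => mt (hMN v))
  exact hlt.not_ge
    (hmin ⟨h.isMatching_symmDiff hN, fun v hv => h.coveredBy_symmDiff (hMN v hv)⟩ hlt.le)

/-- In a finite graph, every matching `M` can be improved to a matching `M'`
covering all vertices covered by `M` and having no augmenting paths of length ≤ 2K+1. -/
theorem stmt12 {V : Type*} [Fintype V] (G : SimpleGraph V) (M : Set (Sym2 V))
    (hM : isMatching G M) (K : ℕ) :
    ∃ M' : Set (Sym2 V), isMatching G M' ∧
      (∀ v : V, coveredBy M v → coveredBy M' v) ∧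
      ∀ (p : ℕ → V) (l : ℕ), l ≤ 2 * K + 1 → ¬ isAugPath G M' p l := by
  obtain ⟨M', hM', hcov, hno⟩ := stmt12_general G M hM (Set.toFinite _)
  exact ⟨M', hM', hcov, fun p l _ => hno p l⟩
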